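/- arXiv:1903.08347 — 5 statements merged into one kernel-verified Lean document; each statement's English description precedes it below -/
import Mathlib

section
/- Let B ≥ 1, let r_1, …, r_B be strictly positive reals, and define p_i = (1 − e^{−r_i}) exp(−∑_{k=1}^{i−1} r_k) for 1 ≤ i ≤ B. Then for each i, 1 − ∑_{k=1}^{i} p_k > 0 and r_i = ln( (1 − ∑_{k=1}^{i−1} p_k) / (1 − ∑_{k=1}^{i} p_k) ). In particular, the map (r_1, …, r_B) ↦ (p_1, …, p_B) from (0,∞)^B to ℝ^B is injective. -/
open Real

/-- The probability of detecting a photon in bin `i`, as a function of the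
incident waveform `r` (bins indexed by `Fin B`, with `∑_{k<i}` the sum over
earlier bins). -/
noncomputable def coatesP {B : ℕ} (r : Fin B → ℝ) (i : Fin B) : ℝ :=
  (1 - Real.exp (-(r i))) * Real.exp (-(∑ k ∈ Finset.Iio i, r k))

theorem coatesP_Iic_step {B : ℕ} (f : Fin B → ℝ) (i : Fin B) :
    ∑ k ∈ Finset.Iic i, f k = f i + ∑ k ∈ Finset.Iio i, f k := by
  rw [← Finset.Iio_insert, Finset.sum_insert (by simp)]

theorem coatesP_step {B : ℕ} (r : Fin B → ℝ) (i : Fin B)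
    (h : 1 - ∑ k ∈ Finset.Iio i, coatesP r k = Real.exp (-(∑ k ∈ Finset.Iio i, r k))) :
    1 - ∑ k ∈ Finset.Iic i, coatesP r k = Real.exp (-(∑ k ∈ Finset.Iic i, r k)) := by
  rw [coatesP_Iic_step, coatesP_Iic_step, neg_add, Real.exp_add, ← sub_sub, sub_right_comm, h,
    coatesP]
  ring

theorem coatesP_Iio {B : ℕ} (r : Fin B → ℝ) (n : ℕ) (hn : n < B) :
    1 - ∑ k ∈ Finset.Iio (⟨n, hn⟩ : Fin B), coatesP r k
      = Real.exp (-(∑ k ∈ Finset.Iio (⟨n, hn⟩ : Fin B), r k)) := by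
  induction n with
  | zero =>
    have : Finset.Iio (⟨0, hn⟩ : Fin B) = ∅ := by
      ext x
      simp [Fin.lt_def]
    simp [this]
  | succ m ih =>
    have : Finset.Iio (⟨m + 1, hn⟩ : Fin B) = Finset.Iic ⟨m, by omega⟩ := by
      ext x
      simp only [Finset.mem_Iio, Finset.mem_Iic, Fin.lt_def, Fin.le_def]
      omega
    rw [this]
    exact coatesP_step r _ (ih (by omega))

theorem coatesP_main {B : ℕ} (r : Fin B → ℝ) (i : Fin B) :
    0 < 1 - ∑ k ∈ Finset.Iic i, coatesP r k ∧
        r i = Real.log ((1 - ∑ k ∈ Finset.Iio i, coatesP r k) /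
          (1 - ∑ k ∈ Finset.Iic i, coatesP r k)) := by
  have h := coatesP_Iio r i.1 i.2
  have h' := coatesP_step r i h
  simp only [Fin.eta] at h
  rw [h', h, ← Real.exp_sub, Real.log_exp, coatesP_Iic_step]
  exact ⟨Real.exp_pos _, by ring⟩

/-- For strictly positive `r`, the cumulative detection
probabilities satisfy `1 − ∑_{k≤i} p k > 0` and
`r i = ln((1 − ∑_{k<i} p k)/(1 − ∑_{k≤i} p k))` (Coates correction);
in particular `r ↦ p` is injective on `(0,∞)^B`. -/
theorem coates_correction_inverts
    (B : ℕ) (hB : 1 ≤ B) (r : Fin B → ℝ) (hr : ∀ i, 0 < r i) :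
    (∀ i : Fin B,
        0 < 1 - ∑ k ∈ Finset.Iic i, coatesP r k ∧
        r i = Real.log ((1 - ∑ k ∈ Finset.Iio i, coatesP r k) /
          (1 - ∑ k ∈ Finset.Iic i, coatesP r k))) ∧
      Set.InjOn (coatesP (B := B)) {r | ∀ i, 0 < r i} := by
  refine ⟨fun i => coatesP_main r i, ?_⟩
  intro a _ b _ hab
  funext i
  rw [(coatesP_main a i).2, (coatesP_main b i).2, hab]
end

section
/- Let B ≥ 1, let r_1, …, r_B be strictly positive reals, and define p_i = (1 − e^{−r_i}) exp(−∑_{k=1}^{i−1} r_k). Then the sequence of ratios p_i / r_i is non-increasing in i: for all 1 ≤ i < B, p_{i+1}/r_{i+1} ≤ p_i/r_i. In particular, min_{1 ≤ i ≤ B} p_i/r_i = p_B/r_B. -/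
open Real

/-- For strictly positive bin intensities `r` and detection
probabilities `p i = (1 − e^{−r i}) exp(−∑_{k<i} r k)`, the ratios `p i / r i`
are non-increasing in the bin index; in particular the minimum ratio is
attained at the last bin (index `B − 1` in `0`-based indexing). -/
theorem bin_receptivity_ratio_antitone
    (B : ℕ) (hB : 1 ≤ B) (r : ℕ → ℝ) (hr : ∀ i, i < B → 0 < r i)
    (p : ℕ → ℝ)
    (hp : ∀ i, i < B →
      p i = (1 - Real.exp (-(r i))) * Real.exp (-(∑ k ∈ Finset.range i, r k))) :
    (∀ i, i + 1 < B → p (i + 1) / r (i + 1) ≤ p i / r i) ∧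
      (∀ i, i < B → p (B - 1) / r (B - 1) ≤ p i / r i) := by
  have h1 : ∀ i, i + 1 < B → p (i + 1) / r (i + 1) ≤ p i / r i := by
    intro i hi
    have hi' : i < B := by omega
    have ha := hr i hi'
    have hb := hr (i + 1) hi
    rw [hp i hi', hp (i + 1) hi, Finset.sum_range_succ, neg_add, Real.exp_add]
    set E := Real.exp (-(∑ k ∈ Finset.range i, r k)) with hE
    have hEpos : 0 < E := Real.exp_pos _
    have hepos : 0 < Real.exp (-(r i)) := Real.exp_pos _
    have hA : 1 - Real.exp (-(r (i + 1))) ≤ r (i + 1) := by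
      have := Real.add_one_le_exp (-(r (i + 1)))
      linarith
    have hC : Real.exp (-(r i)) * r i ≤ 1 - Real.exp (-(r i)) := by
      have h := Real.add_one_le_exp (r i)
      have h2 : Real.exp (-(r i)) * Real.exp (r i) = 1 := by
        rw [← Real.exp_add]; simp
      nlinarith
    calc (1 - Real.exp (-(r (i + 1)))) * (E * Real.exp (-(r i))) / r (i + 1)
        ≤ E * Real.exp (-(r i)) := by
          rw [div_le_iff₀ hb, mul_comm]
          exact mul_le_mul_of_nonneg_left hA (by positivity)
      _ ≤ (1 - Real.exp (-(r i))) * E / r i := by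
          rw [le_div_iff₀ ha]
          nlinarith [mul_le_mul_of_nonneg_left hC hEpos.le]
  refine ⟨h1, ?_⟩
  have h2 : ∀ i j, i ≤ j → j < B → p j / r j ≤ p i / r i := by
    intro i j hij
    induction j, hij using Nat.le_induction with
    | base => intro _; exact le_refl _
    | succ n hn ih => intro h; exact (h1 n h).trans (ih (by omega))
  intro i hi
  exact h2 i (B - 1) (by omega) (by omega)
end

section
/- Let B ≥ 2 be an integer and Φ > 0. The function g : (0,∞) → ℝ defined by g(Υ) = B (1 − e^{−ΥΦ}) e^{−(B−1) ΥΦ} attains a unique global maximum at Υ* = (1/Φ) ln(B/(B−1)), and the maximum value is g(Υ*) = ((B−1)/B)^{B−1}; that is, g(Υ) < g(Υ*) for every Υ > 0 with Υ ≠ Υ*. -/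
open Real

/-- For `B ≥ 2` and background flux `Φ > 0`, the last-bin
receptivity `g(Υ) = B (1 − e^{−ΥΦ}) e^{−(B−1)ΥΦ}` attains a unique global
maximum over `Υ ∈ (0,∞)` at `Υ* = (1/Φ) ln(B/(B−1))`, with maximum value
`((B−1)/B)^{B−1}`. -/
theorem last_bin_receptivity_unique_max
    (B : ℕ) (hB : 2 ≤ B) (Φ : ℝ) (hΦ : 0 < Φ)
    (g : ℝ → ℝ)
    (hg : ∀ Υ, g Υ = B * (1 - Real.exp (-(Υ * Φ))) *
      Real.exp (-(((B : ℝ) - 1) * (Υ * Φ))))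
    (Υstar : ℝ) (hstar : Υstar = (1 / Φ) * Real.log ((B : ℝ) / ((B : ℝ) - 1))) :
    g Υstar = (((B : ℝ) - 1) / (B : ℝ)) ^ (B - 1) ∧
      ∀ Υ, 0 < Υ → Υ ≠ Υstar → g Υ < g Υstar := by
  obtain ⟨n, rfl⟩ : ∃ n, B = n + 1 := ⟨B - 1, by omega⟩
  have hn : (0 : ℝ) < n := by
    have : 0 < n := by omega
    exact_mod_cast this
  have hn1 : (0 : ℝ) < (n : ℝ) + 1 := by linarith
  have hg' : ∀ Υ, g Υ = ((n : ℝ) + 1) * (1 - Real.exp (-(Υ * Φ))) *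
      Real.exp (-(Υ * Φ)) ^ n := by
    intro Υ
    rw [hg, ← Real.exp_nat_mul]
    push_cast
    congr 2
    ring
  have hx0 : Real.exp (-(Υstar * Φ)) = (n : ℝ) / (n + 1) := by
    have h1 : -(Υstar * Φ) = Real.log ((n : ℝ) / (n + 1)) := by
      rw [hstar, ← inv_div ((n : ℝ) + 1) n, Real.log_inv]
      push_cast
      rw [add_sub_cancel_right]
      field_simp
    rw [h1, Real.exp_log (by positivity)]
  have hval : g Υstar = ((n : ℝ) / (n + 1)) ^ n := by
    rw [hg', hx0]
    have : ((n : ℝ) + 1) * (1 - n / (n + 1)) = 1 := by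
      field_simp
      ring
    rw [this, one_mul]
  refine ⟨?_, ?_⟩
  · rw [hval]
    push_cast
    simp
  · intro Υ _ hne
    rw [hval, hg']
    have hxne : Real.exp (-(Υ * Φ)) ≠ (n : ℝ) / (n + 1) := by
      rw [← hx0]
      intro h
      have h2 := Real.exp_injective h
      exact hne (mul_right_cancel₀ hΦ.ne' (neg_injective h2))
    have hx := Real.exp_pos (-(Υ * Φ))
    generalize Real.exp (-(Υ * Φ)) = x at hxne hx
    obtain ⟨r, hr⟩ : ∃ r, r = (n : ℝ) / (n + 1) / x := ⟨_, rfl⟩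
    have hrpos : 0 < r := by rw [hr]; positivity
    have hrx : (n : ℝ) / (n + 1) = r * x := by rw [hr]; field_simp
    have hr1 : r ≠ 1 := by
      rintro rfl
      exact hxne (by rw [hrx, one_mul])
    have hB := one_add_mul_le_pow (a := r - 1) (by linarith) n
    rw [add_sub_cancel] at hB
    have hrx' : (n : ℝ) = (n + 1) * x * r := by
      field_simp at hrx
      linarith
    have hkey : ((n : ℝ) + 1) * (1 - x) < 1 + n * (r - 1) := by
      have e : 1 + n * (r - 1) - ((n : ℝ) + 1) * (1 - x) = (n + 1) * x * (r - 1) ^ 2 := by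
        linear_combination (r - 2) * hrx'
      have : 0 < ((n : ℝ) + 1) * x * (r - 1) ^ 2 := by
        have := sub_ne_zero.mpr hr1
        positivity
      linarith
    rw [hrx, mul_pow]
    exact mul_lt_mul_of_pos_right (hkey.trans_le hB) (by positivity)
end

section
/- Let B ≥ 2 be an integer, Φ > 0, and define C_i(Υ) = B (1 − e^{−ΥΦ}) e^{−(i−1) ΥΦ} for 1 ≤ i ≤ B and Υ > 0. Then the quantity min_{1 ≤ i ≤ B} C_i(Υ) is uniquely maximized over Υ ∈ (0,∞) at Υ^opt = (1/Φ) ln(B/(B−1)): for every Υ > 0 with Υ ≠ Υ^opt, min_{1 ≤ i ≤ B} C_i(Υ) < min_{1 ≤ i ≤ B} C_i(Υ^opt). -/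
open Real

theorem key_aux (n : ℕ) (hn : 1 ≤ n) (x y : ℝ) (hx : 0 < x) (hy : y = n / (n + 1))
    (hne : x ≠ y) : (1 - x) * x ^ n < (1 - y) * y ^ n := by
  have hn0 : (0 : ℝ) < n := by exact_mod_cast hn
  have hy0 : 0 < y := by rw [hy]; positivity
  have hyn : y * (n + 1) = n := by rw [hy]; field_simp
  have hs : -1 ≤ y / x - 1 := by
    have : 0 < y / x := by positivity
    linarith
  have hs' : y / x - 1 ≠ 0 := by
    intro h
    apply hne
    have h1 : y / x = 1 := by linarith
    rw [div_eq_one_iff_eq hx.ne'] at h1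
    exact h1.symm
  have hb := one_add_mul_self_lt_rpow_one_add hs hs' (p := ((n + 1 : ℕ) : ℝ))
    (by push_cast; linarith)
  rw [Real.rpow_natCast, add_sub_cancel, div_pow, lt_div_iff₀ (by positivity)] at hb
  push_cast at hb
  have e : (1 + ((n : ℝ) + 1) * (y / x - 1)) * x ^ (n + 1) = n * ((1 - x) * x ^ n) := by
    have : (1 + ((n : ℝ) + 1) * (y / x - 1)) * x = n * (1 - x) := by
      field_simp
      linarith
    rw [pow_succ]
    linear_combination x ^ n * this
  rw [e] at hb
  have e2 : y ^ (n + 1) = n * ((1 - y) * y ^ n) := by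
    rw [pow_succ]
    linear_combination y ^ n * hyn
  rw [e2] at hb
  exact lt_of_mul_lt_mul_left hb hn0.le

/-- For `B ≥ 2` bins and background flux `Φ > 0`, with bin
receptivities `C i Υ = B (1 − e^{−ΥΦ}) e^{−i·ΥΦ}` (in `0`-based indexing), the
minimum bin receptivity `min_{i<B} C i Υ` is uniquely maximized over
`Υ ∈ (0,∞)` at `Υ^opt = (1/Φ) ln(B/(B−1))`. -/
theorem optimal_attenuation_maximizes_min_receptivity
    (B : ℕ) (hB : 2 ≤ B) (Φ : ℝ) (hΦ : 0 < Φ)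
    (C : ℕ → ℝ → ℝ)
    (hC : ∀ i Υ, C i Υ = B * (1 - Real.exp (-(Υ * Φ))) *
      Real.exp (-((i : ℝ) * (Υ * Φ))))
    (Υopt : ℝ) (hopt : Υopt = (1 / Φ) * Real.log ((B : ℝ) / ((B : ℝ) - 1)))
    (Υ : ℝ) (hΥ : 0 < Υ) (hne : Υ ≠ Υopt) :
    (Finset.range B).inf' (Finset.nonempty_range_iff.mpr (by omega))
        (fun i => C i Υ) <
      (Finset.range B).inf' (Finset.nonempty_range_iff.mpr (by omega))
        (fun i => C i Υopt) := by
  have hB2 : (2 : ℝ) ≤ B := by exact_mod_cast hB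
  have hcast : ((B - 1 : ℕ) : ℝ) = (B : ℝ) - 1 := by
    rw [Nat.cast_sub (by omega)]; simp
  have hC' : ∀ i Υ, C i Υ = B * ((1 - Real.exp (-(Υ * Φ))) * Real.exp (-(Υ * Φ)) ^ i) := by
    intro i Υ
    rw [hC, ← Real.exp_nat_mul, mul_assoc, mul_neg]
  have hlog : Υopt * Φ = Real.log ((B : ℝ) / ((B : ℝ) - 1)) := by
    rw [hopt]; field_simp
  have hy : Real.exp (-(Υopt * Φ)) = ((B - 1 : ℕ) : ℝ) / (((B - 1 : ℕ) : ℝ) + 1) := by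
    rw [hlog, Real.exp_neg, Real.exp_log (div_pos (by linarith) (by linarith)), hcast, inv_div,
      sub_add_cancel]
  have hk := key_aux (B - 1) (by omega) (Real.exp (-(Υ * Φ))) _ (Real.exp_pos _) hy (by
    intro h
    have h1 := Real.exp_injective h
    exact hne (mul_right_cancel₀ hΦ.ne' (neg_injective h1)))
  have hy1 : Real.exp (-(Υopt * Φ)) ≤ 1 := by
    rw [hy, hcast, sub_add_cancel, div_le_one (by linarith)]
    linarith
  refine lt_of_le_of_lt (Finset.inf'_le _ (Finset.mem_range.mpr (by omega : B - 1 < B))) ?_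
  rw [Finset.lt_inf'_iff]
  intro i hi
  rw [Finset.mem_range] at hi
  rw [hC', hC']
  refine mul_lt_mul_of_pos_left (hk.trans_le ?_) (by linarith)
  exact mul_le_mul_of_nonneg_left
    (pow_le_pow_of_le_one (Real.exp_pos _).le hy1 (by omega)) (by linarith)
end

section
/- Let S and T be strictly positive reals. The function L : (0,∞) → ℝ defined by L(Φ) = (1 − e^{−Φ})^S · e^{−ΦT} attains a unique global maximum at Φ̂ = ln((S+T)/T); that is, L(Φ) < L(Φ̂) for every Φ > 0 with Φ ≠ Φ̂. -/
open Real

/-- For `S, T > 0`, the likelihood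
`L(Φ) = (1 − e^{−Φ})^S · e^{−ΦT}` attains a unique global maximum over
`Φ ∈ (0,∞)` at `Φ̂ = ln((S+T)/T)`: for every `Φ > 0` with `Φ ≠ Φ̂`,
`L(Φ) < L(Φ̂)`. -/
theorem background_flux_mle
    (S T : ℝ) (hS : 0 < S) (hT : 0 < T)
    (L : ℝ → ℝ)
    (hL : ∀ Φ, L Φ = (1 - Real.exp (-Φ)) ^ S * Real.exp (-(Φ * T)))
    (Φhat : ℝ) (hΦhat : Φhat = Real.log ((S + T) / T)) :
    ∀ Φ, 0 < Φ → Φ ≠ Φhat → L Φ < L Φhat := by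
  intro Φ hΦ hne
  have hST : 0 < S + T := by linarith
  have hpos : 0 < (S + T) / T := by positivity
  have hq : Real.exp (-Φhat) = T / (S + T) := by
    rw [hΦhat, Real.exp_neg, Real.exp_log hpos, inv_div]
  have hq1 : 1 - Real.exp (-Φhat) = S / (S + T) := by
    rw [hq]; field_simp; ring
  have hp1 : 0 < 1 - Real.exp (-Φ) := by
    have : Real.exp (-Φ) < 1 := Real.exp_lt_one_iff.mpr (by linarith)
    linarith
  have hr1 : 0 < 1 - Real.exp (-Φhat) := by rw [hq1]; positivity
  rw [hL, hL, Real.rpow_def_of_pos hp1, Real.rpow_def_of_pos hr1, ← Real.exp_add, ← Real.exp_add,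
    Real.exp_lt_exp]
  have h1 : Φhat - Φ + 1 < Real.exp (Φhat - Φ) :=
    Real.add_one_lt_exp (sub_ne_zero.mpr (Ne.symm hne))
  have h2 : Real.exp (Φhat - Φ) = Real.exp (-Φ) * ((S + T) / T) := by
    rw [sub_eq_add_neg, Real.exp_add, hΦhat, Real.exp_log hpos, mul_comm]
  have h3 := Real.log_le_sub_one_of_pos (div_pos hp1 hr1)
  rw [Real.log_div hp1.ne' hr1.ne'] at h3
  have h4 : (1 - Real.exp (-Φ)) / (1 - Real.exp (-Φhat))
      = (1 - Real.exp (-Φ)) * ((S + T) / S) := by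
    rw [hq1]; field_simp
  rw [h4] at h3
  rw [h2] at h1
  have h5 := mul_lt_mul_of_pos_left h1 hT
  have h6 := mul_le_mul_of_nonneg_left h3 hS.le
  have e5 : T * (Real.exp (-Φ) * ((S + T) / T)) = Real.exp (-Φ) * (S + T) := by field_simp
  have e6 : S * ((1 - Real.exp (-Φ)) * ((S + T) / S) - 1)
      = (1 - Real.exp (-Φ)) * (S + T) - S := by field_simp
  rw [e5] at h5
  rw [e6] at h6
  linarith
end
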